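/- Let M be a symmetric positive definite n×n matrix and let P, P̃ be invertible n×n matrices. Define Ŝ = PᵀM⁻¹P and S̃ = P̃ᵀM⁻¹P̃. Then for every nonzero vector v, σ_min(P P̃⁻¹)² / cond(M) ≤ (vᵀ Ŝ v)/(vᵀ S̃ v) ≤ σ_max(P P̃⁻¹)² · cond(M), where σ_min, σ_max denote the smallest and largest singular values and cond(M) = λ_max(M)/λ_min(M). -/

import Mathlib

open Matrix

theorem stmt6_aux {n : ℕ} (M : Matrix (Fin n) (Fin n) ℝ) (hM : M.PosDef)
    (lmin lmax : ℝ) (hlmin : 0 < lmin) (hlmax : lmin ≤ lmax)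
    (hM_lb : ∀ u : Fin n → ℝ, lmin * (u ⬝ᵥ u) ≤ u ⬝ᵥ M.mulVec u)
    (hM_ub : ∀ u : Fin n → ℝ, u ⬝ᵥ M.mulVec u ≤ lmax * (u ⬝ᵥ u)) (w : Fin n → ℝ) :
    lmin * (w ⬝ᵥ M⁻¹.mulVec w) ≤ w ⬝ᵥ w ∧ w ⬝ᵥ w ≤ lmax * (w ⬝ᵥ M⁻¹.mulVec w) := by
  have hdet : IsUnit M.det := (Matrix.isUnit_iff_isUnit_det M).1 hM.isUnit
  obtain ⟨x, hx⟩ : ∃ x, x = M⁻¹.mulVec w := ⟨_, rfl⟩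
  have hw : M.mulVec x = w := by
    rw [hx, Matrix.mulVec_mulVec, Matrix.mul_nonsing_inv _ hdet, Matrix.one_mulVec]
  rw [← hx]
  have hT : Mᵀ = M := by
    have h := hM.isHermitian.eq
    rwa [Matrix.conjTranspose_eq_transpose_of_trivial] at h
  have hsym : x ⬝ᵥ M.mulVec w = w ⬝ᵥ w := by
    rw [Matrix.dotProduct_mulVec, ← Matrix.mulVec_transpose, hT, hw]
  have hc : x ⬝ᵥ w = w ⬝ᵥ x := dotProduct_comm _ _
  constructor
  · have h1 : 0 ≤ (w - lmin • x) ⬝ᵥ (w - lmin • x) :=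
      Finset.sum_nonneg fun i _ => mul_self_nonneg _
    have h2 := hM_lb x
    rw [hw, hc] at h2
    simp only [sub_dotProduct, dotProduct_sub, smul_dotProduct, dotProduct_smul,
      smul_eq_mul, hc] at h1
    nlinarith [mul_le_mul_of_nonneg_left h2 hlmin.le]
  · have hl : 0 < lmax := hlmin.trans_le hlmax
    have h1 : 0 ≤ (w - lmax • x) ⬝ᵥ M.mulVec (w - lmax • x) := by
      refine le_trans (mul_nonneg hlmin.le ?_) (hM_lb _)
      exact Finset.sum_nonneg fun i _ => mul_self_nonneg _
    have h2 := hM_ub w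
    simp only [Matrix.mulVec_sub, Matrix.mulVec_smul, sub_dotProduct, dotProduct_sub,
      smul_dotProduct, dotProduct_smul, smul_eq_mul, hw, hsym, hc] at h1
    refine le_of_mul_le_mul_left ?_ hl
    linarith

/-- Spectral equivalence between Ŝ = PᵀM⁻¹P and S̃ = P̃ᵀM⁻¹P̃ in terms of the
extreme singular values of P P̃⁻¹ and the condition number cond(M) = λmax/λmin. -/
theorem stmt6 {n : ℕ} (M P Pt : Matrix (Fin n) (Fin n) ℝ) (hM : M.PosDef)
    (hP : IsUnit P) (hPt : IsUnit Pt)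
    (smin smax lmin lmax : ℝ) (hlmin : 0 < lmin) (hlmax : lmin ≤ lmax)
    (hsmin0 : 0 ≤ smin)
    (hM_lb : ∀ u : Fin n → ℝ, lmin * (u ⬝ᵥ u) ≤ u ⬝ᵥ M.mulVec u)
    (hM_ub : ∀ u : Fin n → ℝ, u ⬝ᵥ M.mulVec u ≤ lmax * (u ⬝ᵥ u))
    (hsmin : ∀ u : Fin n → ℝ,
      smin ^ 2 * (u ⬝ᵥ u) ≤ ((P * Pt⁻¹).mulVec u) ⬝ᵥ ((P * Pt⁻¹).mulVec u))
    (hsmax : ∀ u : Fin n → ℝ,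
      ((P * Pt⁻¹).mulVec u) ⬝ᵥ ((P * Pt⁻¹).mulVec u) ≤ smax ^ 2 * (u ⬝ᵥ u)) :
    ∀ v : Fin n → ℝ, v ≠ 0 →
      smin ^ 2 / (lmax / lmin) ≤
          (v ⬝ᵥ (Pᵀ * M⁻¹ * P).mulVec v) / (v ⬝ᵥ (Ptᵀ * M⁻¹ * Pt).mulVec v) ∧
        (v ⬝ᵥ (Pᵀ * M⁻¹ * P).mulVec v) / (v ⬝ᵥ (Ptᵀ * M⁻¹ * Pt).mulVec v) ≤
          smax ^ 2 * (lmax / lmin) := by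
  intro v hv
  have hdet : IsUnit Pt.det := (Matrix.isUnit_iff_isUnit_det Pt).1 hPt
  have key : ∀ Q : Matrix (Fin n) (Fin n) ℝ, v ⬝ᵥ (Qᵀ * M⁻¹ * Q).mulVec v
      = Q.mulVec v ⬝ᵥ M⁻¹.mulVec (Q.mulVec v) := by
    intro Q
    rw [← Matrix.mulVec_mulVec, ← Matrix.mulVec_mulVec, Matrix.dotProduct_mulVec,
      Matrix.vecMul_transpose]
  rw [key, key]
  have hz : (P * Pt⁻¹).mulVec (Pt.mulVec v) = P.mulVec v := by
    rw [Matrix.mulVec_mulVec, Matrix.mul_assoc, Matrix.nonsing_inv_mul _ hdet, Matrix.mul_one]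
  have h3 := hsmin (Pt.mulVec v)
  have h4 := hsmax (Pt.mulVec v)
  rw [hz] at h3 h4
  have hw0 : Pt.mulVec v ≠ 0 := by
    intro h
    apply hv
    have : Pt⁻¹.mulVec (Pt.mulVec v) = v := by
      rw [Matrix.mulVec_mulVec, Matrix.nonsing_inv_mul _ hdet, Matrix.one_mulVec]
    rw [← this, h, Matrix.mulVec_zero]
  obtain ⟨w1, w2⟩ := stmt6_aux M hM lmin lmax hlmin hlmax hM_lb hM_ub (Pt.mulVec v)
  obtain ⟨z1, z2⟩ := stmt6_aux M hM lmin lmax hlmin hlmax hM_lb hM_ub (P.mulVec v)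
  have hl : 0 < lmax := hlmin.trans_le hlmax
  have hww : 0 < Pt.mulVec v ⬝ᵥ Pt.mulVec v :=
    lt_of_le_of_ne (Finset.sum_nonneg fun i _ => mul_self_nonneg _)
      (fun h => hw0 (dotProduct_self_eq_zero.1 h.symm))
  generalize Pt.mulVec v ⬝ᵥ M⁻¹.mulVec (Pt.mulVec v) = b at *
  generalize P.mulVec v ⬝ᵥ M⁻¹.mulVec (P.mulVec v) = a at *
  have hb : 0 < b := pos_of_mul_pos_right (hww.trans_le w2) hl.le
  have e1 := mul_le_mul_of_nonneg_left w1 (sq_nonneg smin)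
  have e2 := mul_le_mul_of_nonneg_left w2 (sq_nonneg smax)
  constructor
  · rw [div_div_eq_mul_div, div_le_div_iff₀ hl hb]
    linarith
  · rw [← mul_div_assoc, div_le_div_iff₀ hb hlmin]
    linarith
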